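/- arXiv:1502.03967 — 7 statements merged into one kernel-verified Lean document; each statement's English description precedes it below -/
import Mathlib

section
/- Let > be a semigroup order on the monomials of A = K[x₁,…,xₙ] whose local variables are exactly x_{j₁},…,x_{j_k}. Then > is a control order if and only if S := {1+g : g ∈ A, g = 0 or lt(g) < 1} equals {1+g : g ∈ ⟨x_{j₁},…,x_{j_k}⟩}. -/
open scoped Classical

noncomputable section

/-- A semigroup order on monomials: a strict total order on exponent vectors (written
additively; the monomial `1` corresponds to `0`) compatible with multiplication. -/
def IsSemigroupOrder {σ : Type*} (lt : (σ →₀ ℕ) → (σ →₀ ℕ) → Prop) : Prop :=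
  IsStrictTotalOrder (σ →₀ ℕ) lt ∧ ∀ a b c : σ →₀ ℕ, lt a b → lt (c + a) (c + b)

/-- The variable `i` is local for the order `lt`, i.e. `x_i < 1`. -/
def IsLocalVar {σ : Type*} (lt : (σ →₀ ℕ) → (σ →₀ ℕ) → Prop) (i : σ) : Prop :=
  lt (Finsupp.single i 1) 0

/-- A control order: a semigroup order under which every monomial divisible by a local
variable is `< 1`. -/
def IsControlOrder {σ : Type*} (lt : (σ →₀ ℕ) → (σ →₀ ℕ) → Prop) : Prop :=
  IsSemigroupOrder lt ∧ ∀ m : σ →₀ ℕ, (∃ i, IsLocalVar lt i ∧ m i ≠ 0) → lt m 0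

/-- `m` is the leading monomial of `g` w.r.t. `lt`. -/
def IsLeadingMonomial {K : Type*} [CommSemiring K] {σ : Type*}
    (lt : (σ →₀ ℕ) → (σ →₀ ℕ) → Prop) (g : MvPolynomial σ K) (m : σ →₀ ℕ) : Prop :=
  m ∈ g.support ∧ ∀ m' ∈ g.support, m' ≠ m → lt m' m

/-- The multiplicative set `S = {1 + g : g = 0 or lt(g) < 1}`. -/
def SDen (K : Type*) [CommSemiring K] {σ : Type*}
    (lt : (σ →₀ ℕ) → (σ →₀ ℕ) → Prop) : Set (MvPolynomial σ K) :=
  {f | ∃ g : MvPolynomial σ K, f = 1 + g ∧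
    (g = 0 ∨ ∃ m, IsLeadingMonomial lt g m ∧ lt m 0)}

/-- `I = ⋂ i ∈ s, Q i` is a minimal primary decomposition: every `Q i` is primary, the
radicals are pairwise distinct, and no component contains the intersection of the others. -/
def MinPrimDecOn {R : Type*} [CommRing R] {ι : Type*} (I : Ideal R) (Q : ι → Ideal R)
    (s : Finset ι) : Prop :=
  I = ⨅ i ∈ s, Q i ∧ (∀ i ∈ s, (Q i).IsPrimary) ∧
    (∀ i ∈ s, ∀ j ∈ s, (Q i).radical = (Q j).radical → i = j) ∧
    ∀ i ∈ s, ¬ (⨅ j ∈ s.erase i, Q j) ≤ Q i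

/-- The extraction determined by the decomposition `Q` (over `s`) and the ideal `J`:
the intersection of those components `Q i` with `Q i + J ≠ A` (which is `⊤` = the whole
ring when there are no such components). -/
def extractionFrom {R : Type*} [CommRing R] {ι : Type*} (J : Ideal R) (Q : ι → Ideal R)
    (s : Finset ι) : Ideal R :=
  ⨅ i ∈ s.filter (fun i => Q i ⊔ J ≠ ⊤), Q i

/-- `B` is the extraction `β(I,J)` of `I` by `J`. -/
def IsExtraction {R : Type*} [CommRing R] (I J B : Ideal R) : Prop :=
  ∃ (k : ℕ) (Q : Fin k → Ideal R), MinPrimDecOn I Q Finset.univ ∧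
    B = extractionFrom J Q Finset.univ

/-- `t ⊆ s` determines an isolated set of primes of the decomposition `Q` over `s`. -/
def IsIsolatedOn {R : Type*} [CommRing R] {ι : Type*} (Q : ι → Ideal R)
    (s t : Finset ι) : Prop :=
  t ⊆ s ∧ ∀ j ∈ s, (∃ i ∈ t, (Q j).radical ≤ (Q i).radical) → j ∈ t

/-- The lifted ideal `W' = ⟨W, t₁ - g₁, …, t_s - g_s⟩ ⊆ A' = K[x₁,…,xₙ,t₁,…,t_s]`. -/
def liftIdeal {K : Type*} [CommRing K] {n s : ℕ} (g : Fin s → MvPolynomial (Fin n) K)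
    (W : Ideal (MvPolynomial (Fin n) K)) : Ideal (MvPolynomial (Fin n ⊕ Fin s) K) :=
  W.map (MvPolynomial.rename (Sum.inl : Fin n → Fin n ⊕ Fin s)).toRingHom ⊔
    Ideal.span (Set.range fun w : Fin s =>
      (MvPolynomial.X (Sum.inr w) : MvPolynomial (Fin n ⊕ Fin s) K) -
        MvPolynomial.rename (Sum.inl : Fin n → Fin n ⊕ Fin s) (g w))

/-- The substitution homomorphism `φ : A' → A`, fixing each `x_i` and sending `t_w ↦ g_w`. -/
def substHom {K : Type*} [CommRing K] {n s : ℕ} (g : Fin s → MvPolynomial (Fin n) K) :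
    MvPolynomial (Fin n ⊕ Fin s) K →ₐ[K] MvPolynomial (Fin n) K :=
  MvPolynomial.aeval (Sum.elim MvPolynomial.X g)

theorem aux_global {n : ℕ} (lt : (Fin n →₀ ℕ) → (Fin n →₀ ℕ) → Prop)
    (hsem : IsSemigroupOrder lt) (m : Fin n →₀ ℕ) :
    (∀ i, m i ≠ 0 → ¬ IsLocalVar lt i) → ¬ lt m 0 := by
  obtain ⟨hto, hadd⟩ := hsem
  have irr : ∀ a, ¬ lt a a := fun a => hto.toIrrefl.irrefl a
  have tr : ∀ a b c, lt a b → lt b c → lt a c := fun a b c => hto.toIsTrans.trans a b c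
  have tri : ∀ a, ¬ lt a 0 → a = 0 ∨ lt 0 a := by
    intro a ha
    by_contra hc
    push Not at hc
    exact hc.1 (hto.toTrichotomous.trichotomous a 0 ha hc.2)
  have closed : ∀ a b, ¬ lt a 0 → ¬ lt b 0 → ¬ lt (a + b) 0 := by
    intro a b ha hb hab
    rcases tri b hb with rfl | h
    · rw [add_zero] at hab
      exact ha hab
    · have h1 := hadd 0 b a h
      rw [add_zero] at h1
      exact ha (tr _ _ _ h1 hab)
  have pw : ∀ (i : Fin n) (k : ℕ), ¬ IsLocalVar lt i → ¬ lt (Finsupp.single i k) 0 := by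
    intro i k hi
    induction k with
    | zero => rw [Finsupp.single_zero]; exact irr 0
    | succ k ih => rw [Finsupp.single_add]; exact closed _ _ ih hi
  intro hm
  rw [← Finsupp.sum_single m, Finsupp.sum]
  refine Finset.sum_induction _ (fun a => ¬ lt a 0) closed (irr 0) ?_
  intro i hi
  exact pw i _ (hm i (Finsupp.mem_support_iff.mp hi))

theorem aux_max {α : Type*} (lt : α → α → Prop) (hto : IsStrictTotalOrder α lt)
    (s : Finset α) (hs : s.Nonempty) : ∃ m ∈ s, ∀ m' ∈ s, m' ≠ m → lt m' m := by
  induction hs using Finset.Nonempty.cons_induction with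
  | singleton a => exact ⟨a, by simp, by simp⟩
  | cons a s ha hs ih =>
    obtain ⟨m, hm, h⟩ := ih
    by_cases hl : lt m a
    · refine ⟨a, by simp, ?_⟩
      intro m' hm' hne
      rcases Finset.mem_cons.mp hm' with rfl | h2
      · exact absurd rfl hne
      · by_cases e : m' = m
        · rw [e]; exact hl
        · exact hto.toIsTrans.trans _ _ _ (h m' h2 e) hl
    · refine ⟨m, by simp [hm], ?_⟩
      intro m' hm' hne
      rcases Finset.mem_cons.mp hm' with rfl | h2
      · by_contra hc
        exact hne (hto.toTrichotomous.trichotomous _ _ hc hl)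
      · exact h m' h2 hne

/-- a semigroup order with local variables exactly `loc` is a control order
iff `S = {1+g : g = 0 or lt(g) < 1}` equals `{1+g : g ∈ ⟨x_i : i ∈ loc⟩}`. -/
theorem stmt_0 {K : Type*} [Field K] {n : ℕ}
    (lt : (Fin n →₀ ℕ) → (Fin n →₀ ℕ) → Prop) (hsem : IsSemigroupOrder lt)
    (loc : Finset (Fin n)) (hloc : ∀ i, i ∈ loc ↔ IsLocalVar lt i) :
    IsControlOrder lt ↔
      SDen K lt =
        {f : MvPolynomial (Fin n) K |
          ∃ g ∈ Ideal.span ((fun i => (MvPolynomial.X i : MvPolynomial (Fin n) K)) ''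
            (loc : Set (Fin n))), f = 1 + g} := by
  have hto := hsem.1
  constructor
  · rintro ⟨-, hc⟩
    ext f
    constructor
    · rintro ⟨g, rfl, hg⟩
      refine ⟨g, ?_, rfl⟩
      rcases hg with rfl | ⟨m, ⟨hm, hmax⟩, hm0⟩
      · exact Ideal.zero_mem _
      · rw [MvPolynomial.mem_ideal_span_X_image]
        intro m' hm'
        have h0 : lt m' 0 := by
          by_cases e : m' = m
          · rw [e]; exact hm0
          · exact hto.toIsTrans.trans _ _ _ (hmax m' hm' e) hm0
        by_contra hcon
        push Not at hcon
        refine aux_global lt hsem m' ?_ h0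
        intro i hi hl
        exact hi (hcon i (by simpa using (hloc i).mpr hl))
    · rintro ⟨g, hg, rfl⟩
      refine ⟨g, rfl, ?_⟩
      by_cases h0 : g = 0
      · exact Or.inl h0
      · right
        obtain ⟨m, hm, hmax⟩ := aux_max lt hto g.support (MvPolynomial.support_nonempty.mpr h0)
        refine ⟨m, ⟨hm, hmax⟩, ?_⟩
        rw [MvPolynomial.mem_ideal_span_X_image] at hg
        obtain ⟨i, hi, hmi⟩ := hg m hm
        exact hc m ⟨i, (hloc i).mp (by simpa using hi), hmi⟩
  · intro hS
    refine ⟨hsem, ?_⟩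
    rintro m ⟨i, hi, hmi⟩
    have hmem : (1 + MvPolynomial.monomial m (1 : K)) ∈ SDen K lt := by
      rw [hS]
      refine ⟨_, ?_, rfl⟩
      rw [MvPolynomial.mem_ideal_span_X_image]
      intro m' hm'
      have e : m' = m := by
        have := MvPolynomial.support_monomial_subset hm'
        simpa using this
      subst e
      exact ⟨i, by simpa using (hloc i).mpr hi, hmi⟩
    obtain ⟨g, hg, hh⟩ := hmem
    have hg' := add_left_cancel hg
    subst hg'
    rcases hh with h | ⟨m', ⟨hm', -⟩, h0⟩
    · simp at h
    · have e : m' = m := by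
        have := MvPolynomial.support_monomial_subset hm'
        simpa using this
      rw [← e]; exact h0
end
end

section
/- If I' = Q̃₁ ∩ … ∩ Q̃_k is a minimal primary decomposition of I' in A', then I = φ(Q̃₁) ∩ … ∩ φ(Q̃_k), each φ(Q̃_i) is a primary ideal of A, and this expression is a minimal primary decomposition of I in A. -/
open scoped Classical

noncomputable section

theorem aux_sub_mem {K : Type*} [Field K] {n s : ℕ}
    (g : Fin s → MvPolynomial (Fin n) K) (p : MvPolynomial (Fin n ⊕ Fin s) K) :
    p - MvPolynomial.rename (Sum.inl : Fin n → Fin n ⊕ Fin s) (substHom g p) ∈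
      Ideal.span (Set.range fun w : Fin s =>
      (MvPolynomial.X (Sum.inr w) : MvPolynomial (Fin n ⊕ Fin s) K) -
        MvPolynomial.rename (Sum.inl : Fin n → Fin n ⊕ Fin s) (g w)) := by
  set S := Ideal.span (Set.range fun w : Fin s =>
      (MvPolynomial.X (Sum.inr w) : MvPolynomial (Fin n ⊕ Fin s) K) -
        MvPolynomial.rename (Sum.inl : Fin n → Fin n ⊕ Fin s) (g w)) with hS
  have key : (Ideal.Quotient.mkₐ K S) = (Ideal.Quotient.mkₐ K S).comp
      ((MvPolynomial.rename (Sum.inl : Fin n → Fin n ⊕ Fin s)).comp (substHom g)) := by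
    apply MvPolynomial.algHom_ext
    rintro (i | w)
    · simp [substHom]
    · simp only [substHom, AlgHom.comp_apply, MvPolynomial.aeval_X, Sum.elim_inr,
        Ideal.Quotient.mkₐ_eq_mk]
      rw [Ideal.Quotient.eq]
      exact Ideal.subset_span ⟨w, rfl⟩
  have := DFunLike.congr_fun key p
  simp only [AlgHom.comp_apply, Ideal.Quotient.mkₐ_eq_mk] at this
  exact Ideal.Quotient.eq.mp this

theorem aux_subst_rename {K : Type*} [Field K] {n s : ℕ}
    (g : Fin s → MvPolynomial (Fin n) K) (p : MvPolynomial (Fin n) K) :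
    substHom g (MvPolynomial.rename (Sum.inl : Fin n → Fin n ⊕ Fin s) p) = p := by
  rw [substHom, MvPolynomial.aeval_rename, Sum.elim_comp_inl, MvPolynomial.aeval_X_left_apply]

theorem aux_lift {K : Type*} [Field K] {n s : ℕ}
    (g : Fin s → MvPolynomial (Fin n) K) (I : Ideal (MvPolynomial (Fin n) K)) :
    liftIdeal g I = I.comap (substHom g) := by
  apply le_antisymm
  · refine sup_le (Ideal.map_le_iff_le_comap.mpr fun p hp => ?_) (Ideal.span_le.mpr ?_)
    · change substHom g (MvPolynomial.rename (Sum.inl : Fin n → Fin n ⊕ Fin s) p) ∈ I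
      rwa [aux_subst_rename]
    · rintro _ ⟨w, rfl⟩
      change substHom g _ ∈ I
      rw [map_sub, aux_subst_rename]
      simp [substHom]
  · intro p hp
    rw [← sub_add_cancel p (MvPolynomial.rename Sum.inl (substHom g p))]
    exact add_mem (Ideal.mem_sup_right (aux_sub_mem g p))
      (Ideal.mem_sup_left (Ideal.mem_map_of_mem
        (MvPolynomial.rename (Sum.inl : Fin n → Fin n ⊕ Fin s)).toRingHom hp))

theorem aux_min {R S : Type*} [CommRing R] [CommRing S] (f : R →+* S)
    (hf : Function.Surjective f) {ι : Type*} (I : Ideal S) (P : ι → Ideal S) (s : Finset ι)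
    (h : MinPrimDecOn (I.comap f) (fun i => (P i).comap f) s) : MinPrimDecOn I P s := by
  obtain ⟨h1, h2, h3, h4⟩ := h
  refine ⟨?_, ?_, ?_, ?_⟩
  · apply Ideal.comap_injective_of_surjective f hf
    simp only [h1, Ideal.comap_iInf]
  · intro i hi
    have := h2 i hi
    rw [Ideal.isPrimary_iff] at this ⊢
    refine ⟨fun e => this.1 (by simp [e]), fun {x y} hxy => ?_⟩
    obtain ⟨x, rfl⟩ := hf x
    obtain ⟨y, rfl⟩ := hf y
    have h := this.2 (x := x) (y := y) (by simpa [Ideal.mem_comap] using hxy)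
    rwa [← Ideal.comap_radical, Ideal.mem_comap, Ideal.mem_comap] at h
  · intro i hi j hj e
    apply h3 i hi j hj
    simp only [← Ideal.comap_radical, e]
  · intro i hi hle
    apply h4 i hi
    have := Ideal.comap_mono (f := f) hle
    simpa only [Ideal.comap_iInf] using this

/-- if `I' = ⋂ Q̃ i` is a minimal primary decomposition of the lifted ideal
`I' = ⟨I, t₁-g₁,…,t_s-g_s⟩` in `A'`, then `I = ⋂ φ(Q̃ i)` and this is a minimal primary
decomposition of `I` in `A` (in particular each `φ(Q̃ i)` is primary). -/
theorem stmt_3 {K : Type*} [Field K] {n s : ℕ}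
    (g : Fin s → MvPolynomial (Fin n) K) (I : Ideal (MvPolynomial (Fin n) K))
    (k : ℕ) (Qt : Fin k → Ideal (MvPolynomial (Fin n ⊕ Fin s) K))
    (hdec : MinPrimDecOn (liftIdeal g I) Qt Finset.univ) :
    MinPrimDecOn I (fun i => (Qt i).map (substHom g)) Finset.univ := by
  have hf : Function.Surjective (substHom g) := fun p => ⟨_, aux_subst_rename g p⟩
  apply aux_min (substHom g).toRingHom hf
  have e : (fun i => ((Qt i).map (substHom g)).comap (substHom g).toRingHom) = Qt := by
    funext i
    have h0 : liftIdeal g I ≤ Qt i := by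
      rw [hdec.1]
      exact iInf₂_le i (Finset.mem_univ i)
    have h1 : Ideal.comap (substHom g).toRingHom ((Qt i).map (substHom g).toRingHom) =
        Qt i ⊔ Ideal.comap (substHom g).toRingHom ⊥ :=
      Ideal.comap_map_of_surjective _ hf _
    refine h1.trans (sup_eq_left.mpr (le_trans ?_ h0))
    rw [aux_lift]
    exact Ideal.comap_mono bot_le
  rw [aux_lift] at hdec
  rw [e]
  exact hdec
end
end

section
/- Let I and J be ideals of A = K[x₁,…,xₙ], and let I = Q₁ ∩ … ∩ Q_k and I = M₁ ∩ … ∩ M_l be two minimal primary decompositions of I. Then ∩{Q_i : Q_i + J ≠ A} = ∩{M_j : M_j + J ≠ A}, where an empty intersection is interpreted as A. In other words, the extraction β(I,J) is well defined, independent of the chosen minimal primary decomposition. -/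
open scoped Classical

noncomputable section

theorem mem_extractionFrom_iff {R : Type*} [CommRing R] {ι : Type*} (I J : Ideal R)
    (Q : ι → Ideal R) (s : Finset ι) (hI : I = ⨅ i ∈ s, Q i)
    (hP : ∀ i ∈ s, (Q i).IsPrimary) (f : R) :
    f ∈ extractionFrom J Q s ↔ ∃ u : R, Ideal.Quotient.mk J u = 1 ∧ u * f ∈ I := by
  have key : ∀ i, Q i ⊔ J = ⊤ ↔ ∃ u ∈ Q i, Ideal.Quotient.mk J u = 1 := by
    intro i
    rw [Ideal.eq_top_iff_one, Submodule.mem_sup]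
    constructor
    · rintro ⟨y, hy, z, hz, h⟩
      refine ⟨y, hy, ?_⟩
      rw [← map_one (Ideal.Quotient.mk J), ← h, map_add, Ideal.Quotient.eq_zero_iff_mem.2 hz,
        add_zero]
    · rintro ⟨u, hu, h⟩
      refine ⟨u, hu, 1 - u, ?_, by ring⟩
      rw [← Ideal.Quotient.eq_zero_iff_mem, map_sub, h, map_one, sub_self]
  subst hI
  simp only [extractionFrom, Submodule.mem_iInf, Finset.mem_filter, and_imp]
  constructor
  · intro hf
    have h1 : ∀ i, ∃ u : R, Ideal.Quotient.mk J u = 1 ∧ (Q i ⊔ J = ⊤ → u ∈ Q i) := by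
      intro i
      by_cases h : Q i ⊔ J = ⊤
      · obtain ⟨u, hu, h'⟩ := (key i).1 h
        exact ⟨u, h', fun _ => hu⟩
      · exact ⟨1, map_one _, fun h' => absurd h' h⟩
    choose u hu hu' using h1
    refine ⟨∏ i ∈ s, u i, ?_, ?_⟩
    · rw [map_prod]
      exact Finset.prod_eq_one fun i _ => hu i
    · intro i hi
      by_cases h : Q i ⊔ J = ⊤
      · exact Ideal.mul_mem_right _ _ (Ideal.mem_of_dvd _ (Finset.dvd_prod_of_mem u hi) (hu' i h))
      · exact Ideal.mul_mem_left _ _ (hf i hi h)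
  · rintro ⟨u, hu, huf⟩ i hi hne
    have := huf i hi
    rw [mul_comm] at this
    rcases (Ideal.isPrimary_iff.1 (hP i hi)).2 this with h | ⟨m, hm⟩
    · exact h
    · exact absurd ((key i).2 ⟨u ^ m, hm, by rw [map_pow, hu, one_pow]⟩) hne

/-- the extraction `β(I,J)` is well defined: any two minimal primary
decompositions of `I` give the same value. -/
theorem stmt_4 {K : Type*} [Field K] {n : ℕ}
    (I J : Ideal (MvPolynomial (Fin n) K))
    (k l : ℕ) (Q : Fin k → Ideal (MvPolynomial (Fin n) K))
    (M : Fin l → Ideal (MvPolynomial (Fin n) K))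
    (hQ : MinPrimDecOn I Q Finset.univ) (hM : MinPrimDecOn I M Finset.univ) :
    extractionFrom J Q Finset.univ = extractionFrom J M Finset.univ := by
  ext f
  rw [mem_extractionFrom_iff I J Q _ hQ.1 hQ.2.1, mem_extractionFrom_iff I J M _ hM.1 hM.2.1]
end
end

section
/- Let I = Q₁ ∩ … ∩ Q_k be a minimal primary decomposition of a proper ideal I of A = K[x₁,…,xₙ]. For every isolated set {√Q_{i₁},…,√Q_{i_m}} of prime ideals of I there exists an ideal J ⊆ A such that β(I,J) = Q_{i₁} ∩ … ∩ Q_{i_m}. Consequently, {β(I,J) : J an ideal of A} = {Q_{i₁} ∩ … ∩ Q_{i_m} : {√Q_{i₁},…,√Q_{i_m}} is an isolated set of primes of I}. -/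
open scoped Classical

noncomputable section

theorem exists_max_aux {R : Type*} [CommRing R] [IsJacobsonRing R] {ι : Type*} (P : Ideal R)
    (hP : P.IsPrime) (Q : ι → Ideal R) (u : Finset ι) (h : ∀ j ∈ u, ¬ Q j ≤ P) :
    ∃ M : Ideal R, M.IsMaximal ∧ P ≤ M ∧ ∀ j ∈ u, ¬ Q j ≤ M := by
  have h1 : ¬ (u.inf Q) ≤ P := by
    rw [Ideal.IsPrime.inf_le' hP]
    push Not
    exact h
  have h2 : P.jacobson = P := IsJacobsonRing.out ‹_› hP.isRadical
  obtain ⟨x, hx, hxP⟩ := SetLike.not_le_iff_exists.mp h1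
  rw [← h2, Ideal.jacobson, Submodule.mem_sInf] at hxP
  push Not at hxP
  obtain ⟨M, ⟨hPM, hM⟩, hxM⟩ := hxP
  exact ⟨M, hM, hPM, fun j hj hle => hxM (hle ((Finset.inf_le hj : u.inf Q ≤ Q j) hx))⟩

/-- every intersection of components over an isolated set of primes of `I`
is an extraction `β(I,J)` for some `J`; and the set of extractions of `I` is exactly the
set of such intersections. -/
theorem stmt_6 {K : Type*} [Field K] {n : ℕ}
    (I : Ideal (MvPolynomial (Fin n) K)) (hI : I ≠ ⊤)
    (k : ℕ) (Q : Fin k → Ideal (MvPolynomial (Fin n) K))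
    (hQ : MinPrimDecOn I Q Finset.univ) :
    (∀ t : Finset (Fin k), IsIsolatedOn Q Finset.univ t →
        ∃ J : Ideal (MvPolynomial (Fin n) K),
          extractionFrom J Q Finset.univ = ⨅ i ∈ t, Q i) ∧
      {B : Ideal (MvPolynomial (Fin n) K) |
          ∃ J : Ideal (MvPolynomial (Fin n) K), B = extractionFrom J Q Finset.univ} =
        {B : Ideal (MvPolynomial (Fin n) K) |
          ∃ t : Finset (Fin k), IsIsolatedOn Q Finset.univ t ∧ B = ⨅ i ∈ t, Q i} := by
  have part1 : ∀ t : Finset (Fin k), IsIsolatedOn Q Finset.univ t →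
        ∃ J : Ideal (MvPolynomial (Fin n) K),
          extractionFrom J Q Finset.univ = ⨅ i ∈ t, Q i := by
    intro t ht
    have hex : ∀ i : Fin k, ∃ M : Ideal (MvPolynomial (Fin n) K), i ∈ t →
        (M.IsMaximal ∧ (Q i).radical ≤ M ∧ ∀ j ∈ tᶜ, ¬ Q j ≤ M) := by
      intro i
      by_cases hi : i ∈ t
      · have hp : (Q i).radical.IsPrime := Ideal.isPrime_radical (hQ.2.1 i (Finset.mem_univ i))
        obtain ⟨M, hM⟩ := exists_max_aux (Q i).radical hp Q tᶜ (by
          intro j hj hle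
          exact Finset.mem_compl.mp hj (ht.2 j (Finset.mem_univ j)
            ⟨i, hi, hp.radical_le_iff.mpr hle⟩))
        exact ⟨M, fun _ => hM⟩
      · exact ⟨⊤, fun h => absurd h hi⟩
    choose M hM using hex
    refine ⟨t.inf M, ?_⟩
    have hf : Finset.univ.filter (fun i => Q i ⊔ t.inf M ≠ ⊤) = t := by
      ext j
      simp only [Finset.mem_filter, Finset.mem_univ, true_and]
      constructor
      · intro hj
        obtain ⟨N, hN, hle⟩ := Ideal.exists_le_maximal _ hj
        obtain ⟨i, hi, hiN⟩ := (Ideal.IsPrime.inf_le' hN.isPrime).mp (le_sup_right.trans hle)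
        have hMN : M i = N := (hM i hi).1.eq_of_le hN.ne_top hiN
        by_contra hjt
        exact (hM i hi).2.2 j (Finset.mem_compl.mpr hjt) (hMN ▸ le_sup_left.trans hle)
      · intro hj htop
        refine (hM j hj).1.ne_top (top_le_iff.mp (htop ▸ sup_le ?_ (Finset.inf_le hj)))
        exact Ideal.le_radical.trans (hM j hj).2.1
    unfold extractionFrom
    rw [hf]
  refine ⟨part1, ?_⟩
  ext B
  constructor
  · rintro ⟨J, rfl⟩
    refine ⟨Finset.univ.filter (fun i => Q i ⊔ J ≠ ⊤), ⟨Finset.subset_univ _, ?_⟩, rfl⟩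
    rintro j - ⟨i, hi, hji⟩
    simp only [Finset.mem_filter, Finset.mem_univ, true_and] at hi ⊢
    obtain ⟨N, hN, hle⟩ := Ideal.exists_le_maximal _ hi
    intro htop
    refine hN.ne_top (top_le_iff.mp (htop ▸ sup_le ?_ (le_sup_right.trans hle)))
    exact Ideal.le_radical.trans (hji.trans
      (hN.isPrime.radical_le_iff.mpr (le_sup_left.trans hle)))
  · rintro ⟨t, ht, rfl⟩
    obtain ⟨J, hJ⟩ := part1 t ht
    exact ⟨J, hJ.symm⟩
end
end

section
/- Let > be a semigroup order on the monomials of A = K[x₁,…,xₙ] with multiplicative set S := {1+g : g = 0 or lt(g) < 1}. Then the Krull dimensions satisfy dim(S⁻¹A / S⁻¹I) = dim(A / (S⁻¹I)^c) for every ideal I ⊆ A if and only if > is a control order. -/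
open scoped Classical

noncomputable section

section ord
variable {σ : Type*} {lt : (σ →₀ ℕ) → (σ →₀ ℕ) → Prop}

lemma so_irrefl (h : IsSemigroupOrder lt) (a : σ →₀ ℕ) : ¬ lt a a := by
  have := h.1
  exact irrefl_of lt a

lemma so_trans (h : IsSemigroupOrder lt) {a b c : σ →₀ ℕ} (h1 : lt a b) (h2 : lt b c) :
    lt a c := by
  have := h.1
  exact trans_of lt h1 h2

lemma so_tri (h : IsSemigroupOrder lt) (a b : σ →₀ ℕ) : lt a b ∨ a = b ∨ lt b a := by
  have := h.1
  exact trichotomous_of lt a b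

lemma so_max (h : IsSemigroupOrder lt) (s : Finset (σ →₀ ℕ)) (hs : s.Nonempty) :
    ∃ m ∈ s, ∀ m' ∈ s, m' ≠ m → lt m' m := by
  induction hs using Finset.Nonempty.cons_induction with
  | singleton a => exact ⟨a, by simp⟩
  | cons a s ha hs ih =>
    obtain ⟨m, hm, hmax⟩ := ih
    rcases so_tri h a m with h1 | h1 | h1
    · refine ⟨m, by simp [hm], fun m' hm' hne => ?_⟩
      rcases Finset.mem_cons.1 hm' with rfl | h2
      · exact h1
      · exact hmax m' h2 hne
    · exact absurd (h1 ▸ hm) ha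
    · refine ⟨a, by simp, fun m' hm' hne => ?_⟩
      rcases Finset.mem_cons.1 hm' with rfl | h2
      · exact absurd rfl hne
      · by_cases h3 : m' = m
        · exact h3 ▸ h1
        · exact so_trans h (hmax m' h2 h3) h1

lemma mem_SDen {K : Type*} [CommRing K] (h : IsSemigroupOrder lt) (f : MvPolynomial σ K) :
    f ∈ SDen K lt ↔ ∀ m ∈ (f - 1).support, lt m 0 := by
  constructor
  · rintro ⟨g, rfl, hg⟩ m hm
    rw [add_sub_cancel_left] at hm
    rcases hg with rfl | ⟨m0, ⟨hm0, hmax⟩, hlt⟩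
    · simp at hm
    · by_cases h1 : m = m0
      · exact h1 ▸ hlt
      · exact so_trans h (hmax m hm h1) hlt
  · intro hf
    refine ⟨f - 1, by ring, ?_⟩
    by_cases h0 : f - 1 = 0
    · exact Or.inl h0
    · obtain ⟨m, hm, hmax⟩ := so_max h _ (MvPolynomial.support_nonempty.2 h0)
      exact Or.inr ⟨m, ⟨hm, hmax⟩, hf m hm⟩

lemma so_add (h : IsSemigroupOrder lt) {a b : σ →₀ ℕ} (ha : ¬ lt a 0) (hb : ¬ lt b 0) :
    ¬ lt (a + b) 0 := by
  intro hab
  rcases so_tri h b 0 with h1 | h1 | h1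
  · exact hb h1
  · rw [h1, add_zero] at hab
    exact ha hab
  · have := h.2 _ _ a h1
    rw [add_zero] at this
    exact ha (so_trans h this hab)

lemma so_nonlocal (h : IsSemigroupOrder lt) (m : σ →₀ ℕ)
    (hm : ∀ i, m i ≠ 0 → ¬ IsLocalVar lt i) : ¬ lt m 0 := by
  induction m using Finsupp.induction_linear with
  | zero => exact so_irrefl h 0
  | add f g hf hg =>
    refine so_add h (hf fun i hi => hm i ?_) (hg fun i hi => hm i ?_)
    · simp [hi]
    · simp [hi]
  | single i k =>
    rcases Nat.eq_zero_or_pos k with rfl | hk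
    · simpa using so_irrefl h 0
    have hi := hm i (by simpa using hk.ne')
    clear hm hk
    induction k with
    | zero => simpa using so_irrefl h 0
    | succ k ih =>
      rw [Finsupp.single_add]
      exact so_add h ih hi

lemma so_local_pow (h : IsSemigroupOrder lt) (i : σ) (hi : IsLocalVar lt i) (k : ℕ) :
    lt (Finsupp.single i (k + 1)) 0 := by
  induction k with
  | zero => exact hi
  | succ k ih =>
    rw [Finsupp.single_add]
    have := h.2 _ _ (Finsupp.single i (k + 1)) hi
    rw [add_zero] at this
    exact so_trans h this ih

end ord

lemma aux_poly_height {R : Type*} [CommRing R] [IsNoetherianRing R] [IsJacobsonRing R]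
    (P : Ideal (Polynomial R)) (hP : P.IsMaximal) :
    ∃ p : Ideal R, p.IsMaximal ∧ P.height = p.height + 1 := by
  have : Nontrivial R := by
    by_contra h
    rw [not_nontrivial_iff_subsingleton] at h
    exact hP.ne_top (Subsingleton.elim _ _)
  exact ⟨P.under R, Polynomial.isMaximal_comap_C_of_isJacobsonRing P,
    Polynomial.height_eq_height_add_one (P.under R) P⟩

lemma aux_mv_height {K : Type*} [Field K] (s : ℕ) (M : Ideal (MvPolynomial (Fin s) K))
    (hM : M.IsMaximal) : (s : ℕ∞) ≤ M.height := by
  induction s with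
  | zero => simp
  | succ s ih =>
    let e := (MvPolynomial.finSuccEquiv K s).toRingEquiv
    have h0 := e.height_map M
    have h1 : (M.map e).IsMaximal := Ideal.map_isMaximal_of_equiv e
    obtain ⟨p, hp, h2⟩ := aux_poly_height _ h1
    rw [← h0, h2]
    push_cast
    gcongr
    exact ih _ hp

lemma aux_equidim (K : Type*) [Field K] (D : Type*) [CommRing D] [IsDomain D] [Algebra K D]
    [Algebra.FiniteType K D] (N : Ideal D) (hN : N.IsMaximal) :
    ringKrullDim D ≤ N.height := by
  obtain ⟨s, g, ginj, gint⟩ := exists_integral_inj_algHom_of_fg K D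
  algebraize [g.toRingHom]
  have : FaithfulSMul (MvPolynomial (Fin s) K) D :=
    (faithfulSMul_iff_algebraMap_injective _ _).2 ginj
  have hN' : (N.under (MvPolynomial (Fin s) K)).IsMaximal :=
    Ideal.isMaximal_comap_of_isIntegral_of_isMaximal N
  have h1 := aux_mv_height s _ hN'
  have h2 : ringKrullDim D ≤ s := by
    have h3 : ringKrullDim (MvPolynomial (Fin s) K) = s := by simp
    rw [← h3]
    exact Order.krullDim_le_of_strictMono
      (PrimeSpectrum.comap (algebraMap (MvPolynomial (Fin s) K) D))
      (fun a b hab => Ideal.IsIntegral.comap_lt_comap hab)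
  have : IsNoetherianRing D := Algebra.FiniteType.isNoetherianRing K D
  have h4 := Ideal.height_eq_height_add_of_liesOver_of_hasGoingDown
    (N.under (MvPolynomial (Fin s) K)) N
  have h5 : (s : ℕ∞) ≤ N.height := by
    rw [h4]; exact h1.trans le_self_add
  exact h2.trans (by exact_mod_cast h5)

lemma dim_le {R : Type*} [CommRing R] (S : Submonoid R) (I' : Ideal (Localization S)) :
    ringKrullDim (Localization S ⧸ I') ≤
      ringKrullDim (R ⧸ I'.comap (algebraMap R (Localization S))) := by
  have : Function.Injective (Ideal.quotientMap I' (algebraMap R (Localization S)) le_rfl) :=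
    Ideal.quotientMap_injective
  rw [ringKrullDim_quotient, ringKrullDim_quotient]
  refine Order.krullDim_le_of_strictMono
    (fun Q => ⟨PrimeSpectrum.comap (algebraMap R (Localization S)) Q.1,
      Ideal.comap_mono (show I' ≤ Q.1.asIdeal from Q.2)⟩) ?_
  intro P Q hPQ
  exact (IsLocalization.orderIsoOfPrime S (Localization S)).strictMono
    (a := ⟨P.1.asIdeal, P.1.2⟩) (b := ⟨Q.1.asIdeal, Q.1.2⟩) hPQ

/-- forward direction, abstractly -/
lemma dim_lt {R : Type*} [CommRing R] (S : Submonoid R) (I' : Ideal (Localization S))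
    (hI : I' ≠ ⊤)
    (hfin : ringKrullDim (R ⧸ I'.comap (algebraMap R (Localization S))) < ⊤)
    (hmax : ∀ M : Ideal R, M.IsMaximal → I'.comap (algebraMap R (Localization S)) ≤ M →
      ∃ s ∈ S, s ∈ M) :
    ringKrullDim (Localization S ⧸ I') ≠
      ringKrullDim (R ⧸ I'.comap (algebraMap R (Localization S))) := by
  intro heq
  have hnt : Nontrivial (Localization S ⧸ I') := Ideal.Quotient.nontrivial_iff.2 hI
  have : FiniteRingKrullDim (Localization S ⧸ I') :=
    finiteRingKrullDim_iff_ne_bot_and_top.2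
      ⟨fun h => by
        have := ringKrullDim_nonneg_of_nontrivial (R := Localization S ⧸ I')
        rw [h] at this; simp at this, by rw [heq]; exact hfin.ne⟩
  obtain ⟨N, hN, hNh⟩ := Ideal.exists_isMaximal_height (R := Localization S ⧸ I')
  set d := ringKrullDim (Localization S ⧸ I') with hd
  -- a series
  let l := LTSeries.longestOf (PrimeSpectrum (Localization S ⧸ I'))
  let c := I'.comap (algebraMap R (Localization S))
  let f : PrimeSpectrum (Localization S ⧸ I') → PrimeSpectrum R := fun Q =>
    PrimeSpectrum.comap (algebraMap R (Localization S))
      (PrimeSpectrum.comap (Ideal.Quotient.mk I') Q)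
  have hf : StrictMono f := by
    intro P Q hPQ
    have h1 : PrimeSpectrum.comap (Ideal.Quotient.mk I') P <
      PrimeSpectrum.comap (Ideal.Quotient.mk I') Q :=
      RingHom.strictMono_comap_of_surjective Ideal.Quotient.mk_surjective hPQ
    exact (IsLocalization.orderIsoOfPrime S (Localization S)).strictMono
      (a := ⟨_, (PrimeSpectrum.comap (Ideal.Quotient.mk I') P).2⟩)
      (b := ⟨_, (PrimeSpectrum.comap (Ideal.Quotient.mk I') Q).2⟩) h1
  have hfc : ∀ Q, c ≤ (f Q).asIdeal := by
    intro Q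
    refine Ideal.comap_mono ?_
    change I' ≤ Ideal.comap _ _
    intro x hx
    rw [Ideal.mem_comap, Ideal.Quotient.eq_zero_iff_mem.2 hx]
    exact zero_mem _
  obtain ⟨M, hM, hle⟩ := (f l.last).asIdeal.exists_le_maximal (f l.last).2.ne_top
  have hlt : f l.last < ⟨M, hM.isPrime⟩ := by
    refine lt_of_le_of_ne hle ?_
    intro h
    obtain ⟨s, hs, hsM⟩ := hmax M hM ((hfc _).trans hle)
    have h2 : s ∈ (f l.last).asIdeal := by rw [h]; exact hsM
    have h3 := (IsLocalization.orderIsoOfPrime S (Localization S)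
      ⟨_, (PrimeSpectrum.comap (Ideal.Quotient.mk I') l.last).2⟩).2.2
    exact Set.disjoint_left.1 h3 hs h2
  let g : PrimeSpectrum (Localization S ⧸ I') →
    PrimeSpectrum.zeroLocus (R := R) (c : Set R) := fun Q => ⟨f Q, hfc Q⟩
  have hg : StrictMono g := fun P Q h => hf h
  let L := (l.map g hg).snoc ⟨⟨M, hM.isPrime⟩, (hfc _).trans hle⟩ (by
    rw [LTSeries.last_map]; exact hlt)
  have h5 := Order.LTSeries.length_le_krullDim L
  rw [← ringKrullDim_quotient] at h5
  have h6 : L.length = l.length + 1 := by simp [L]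
  have h7 : ringKrullDim (Localization S ⧸ I') = l.length := by
    exact Order.krullDim_eq_length_of_finiteDimensionalOrder
  rw [h6, ← heq, hd, h7] at h5
  have : l.length + 1 ≤ l.length := by exact_mod_cast h5
  omega

/-- backward direction, abstractly -/
lemma dim_ge (K : Type*) [Field K] {R : Type*} [CommRing R] [Algebra K R]
    [Algebra.FiniteType K R] (S : Submonoid R) (I' : Ideal (Localization S))
    (hS : ∀ P : Ideal R, P.IsPrime → Disjoint (S : Set R) P →
      ∃ M : Ideal R, M.IsMaximal ∧ P ≤ M ∧ Disjoint (S : Set R) M) :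
    ringKrullDim (R ⧸ I'.comap (algebraMap R (Localization S))) ≤
      ringKrullDim (Localization S ⧸ I') := by
  rw [ringKrullDim_quotient]
  refine iSup_le fun l => ?_
  obtain ⟨p, hp, hpl⟩ := Ideal.exists_minimalPrimes_le
    (show I'.comap (algebraMap R (Localization S)) ≤ l.head.1.asIdeal from l.head.2)
  rw [IsLocalization.minimalPrimes_comap S (Localization S)] at hp
  obtain ⟨Q, hQ, rfl⟩ := hp
  have hQp : Q.IsPrime := hQ.1.1
  set p := Q.comap (algebraMap R (Localization S)) with hpdef
  have hpp : p.IsPrime := Ideal.IsPrime.comap _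
  have hdisj : Disjoint (S : Set R) p :=
    (IsLocalization.orderIsoOfPrime S (Localization S) ⟨Q, hQp⟩).2.2
  obtain ⟨M, hM, hpM, hMS⟩ := hS p hpp hdisj
  have hmap : p.map (algebraMap R (Localization S)) = Q := IsLocalization.map_under S _ Q
  -- l lives in zeroLocus p
  have h1 : (l.length : WithBot ℕ∞) ≤ ringKrullDim (R ⧸ p) := by
    rw [ringKrullDim_quotient]
    let l' : LTSeries (PrimeSpectrum.zeroLocus (R := R) (p : Set R)) :=
      { length := l.length
        toFun := fun i => ⟨(l i).1, hpl.trans (show l.head.1 ≤ (l i).1 from l.head_le i)⟩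
        step := fun i => l.step i }
    exact Order.LTSeries.length_le_krullDim l'
  have hN : (M.map (Ideal.Quotient.mk p)).IsMaximal :=
    Ideal.IsMaximal.map_of_surjective_of_ker_le Ideal.Quotient.mk_surjective
      (by rw [Ideal.mk_ker]; exact hpM)
  have h2 := aux_equidim K (R ⧸ p) _ hN
  have hd2 : Disjoint (Algebra.algebraMapSubmonoid (R ⧸ p) S : Set (R ⧸ p))
      (M.map (Ideal.Quotient.mk p)) := by
    rw [Set.disjoint_left]
    rintro _ ⟨s, hs, rfl⟩ hsM
    have : s ∈ (M.map (Ideal.Quotient.mk p)).comap (Ideal.Quotient.mk p) := hsM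
    rw [Ideal.comap_map_of_surjective _ Ideal.Quotient.mk_surjective, ← RingHom.ker_eq_comap_bot,
      Ideal.mk_ker, sup_eq_left.2 hpM] at this
    exact Set.disjoint_left.1 hMS hs this
  have hNp := hN.isPrime
  have h3 := IsLocalization.height_map_of_disjoint
    (S := Localization S ⧸ p.map (algebraMap R (Localization S)))
    (Algebra.algebraMapSubmonoid (R ⧸ p) S) _ hd2
  have hP2 := IsLocalization.isPrime_of_isPrime_disjoint (Algebra.algebraMapSubmonoid (R ⧸ p) S)
    (Localization S ⧸ p.map (algebraMap R (Localization S))) _ hNp hd2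
  have h4 := Ideal.height_le_ringKrullDim_of_isPrime (I := Ideal.map (algebraMap (R ⧸ p)
    (Localization S ⧸ p.map (algebraMap R (Localization S)))) (M.map (Ideal.Quotient.mk p)))
  rw [h3] at h4
  have h5 : I' ≤ p.map (algebraMap R (Localization S)) := by rw [hmap]; exact hQ.1.2
  have h6 := ringKrullDim_le_of_surjective (Ideal.Quotient.factor h5)
    (Ideal.Quotient.factor_surjective h5)
  exact h1.trans (h2.trans (h4.trans h6))

lemma fwd_disjoint {K : Type*} [Field K] {n : ℕ}
    {lt : (Fin n →₀ ℕ) → (Fin n →₀ ℕ) → Prop} (hsem : IsSemigroupOrder lt)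
    (m : Fin n →₀ ℕ) (hm0 : m ≠ 0) (hm : lt 0 m) (h : MvPolynomial (Fin n) K)
    (hs : (1 - MvPolynomial.monomial m (1 : K)) * h ∈ SDen K lt) : False := by
  rw [mem_SDen hsem] at hs
  have hco : ∀ ν, MvPolynomial.coeff ν ((1 - MvPolynomial.monomial m (1 : K)) * h) =
      MvPolynomial.coeff ν h - MvPolynomial.coeff ν (MvPolynomial.monomial m (1 : K) * h) := by
    intro ν
    rw [sub_mul, one_mul, MvPolynomial.coeff_sub]
  have h00 : MvPolynomial.coeff 0 h ≠ 0 := by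
    intro h0
    refine so_irrefl hsem 0 (hs 0 ?_)
    rw [MvPolynomial.mem_support_iff, MvPolynomial.coeff_sub, hco, h0,
      MvPolynomial.coeff_monomial_mul', if_neg]
    · simp
    · intro hle
      exact hm0 (le_antisymm hle (by simp))
  obtain ⟨μ, hμ, hmax⟩ := so_max hsem h.support ⟨0, MvPolynomial.mem_support_iff.2 h00⟩
  have h1 : lt μ (m + μ) := by
    have := hsem.2 _ _ μ hm
    rwa [add_zero, add_comm μ m] at this
  have hpos : lt 0 (m + μ) := by
    by_cases hμ0 : 0 = μ
    · rw [← hμ0] at h1 ⊢; exact h1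
    · exact so_trans hsem (hmax 0 (MvPolynomial.mem_support_iff.2 h00) hμ0) h1
  have hne : m + μ ≠ 0 := fun h => so_irrefl hsem 0 (by rw [h] at hpos; exact hpos)
  have hz : MvPolynomial.coeff (m + μ) h = 0 := by
    by_contra hc
    have hne' : m + μ ≠ μ := fun h => so_irrefl hsem μ (by rw [h] at h1; exact h1)
    exact so_irrefl hsem _ (so_trans hsem h1 (hmax _ (MvPolynomial.mem_support_iff.2 hc) hne'))
  have := hs (m + μ) (by
    rw [MvPolynomial.mem_support_iff, MvPolynomial.coeff_sub, hco, hz,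
      MvPolynomial.coeff_monomial_mul, MvPolynomial.coeff_one, if_neg (Ne.symm hne)]
    simpa using MvPolynomial.mem_support_iff.1 hμ)
  exact so_irrefl hsem _ (so_trans hsem this hpos)

lemma fwd_max {K : Type*} [Field K] {n : ℕ}
    {lt : (Fin n →₀ ℕ) → (Fin n →₀ ℕ) → Prop} (hsem : IsSemigroupOrder lt)
    (i : Fin n) (hi : IsLocalVar lt i) (M : Ideal (MvPolynomial (Fin n) K)) (hM : M.IsMaximal)
    (hiM : MvPolynomial.X i ∉ M) : ∃ s ∈ SDen K lt, s ∈ M := by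
  let _ : Field (MvPolynomial (Fin n) K ⧸ M) := Ideal.Quotient.field M
  have hfin : Module.Finite K (MvPolynomial (Fin n) K ⧸ M) :=
    finite_of_finite_type_of_isJacobsonRing _ _
  set x : MvPolynomial (Fin n) K ⧸ M := Ideal.Quotient.mkₐ K M (MvPolynomial.X i) with hx
  have hx0 : x ≠ 0 := fun h => hiM (Ideal.Quotient.eq_zero_iff_mem.1 h)
  have hinv := Subalgebra.inv_mem_of_algebraic (K := K) (Algebra.adjoin K {x})
    (x := ⟨x, Algebra.self_mem_adjoin_singleton K x⟩) (Algebra.IsAlgebraic.isAlgebraic x)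
  have hinv : x⁻¹ ∈ Algebra.adjoin K {x} := hinv
  rw [Algebra.adjoin_singleton_eq_range_aeval] at hinv
  obtain ⟨q, hq⟩ := hinv
  have hq' : Polynomial.aeval x q = x⁻¹ := hq
  refine ⟨1 - Polynomial.aeval (MvPolynomial.X i) (Polynomial.X * q), ?_, ?_⟩
  · rw [mem_SDen hsem]
    intro m hm
    have h1 : (1 - Polynomial.aeval (MvPolynomial.X i : MvPolynomial (Fin n) K)
        (Polynomial.X * q) - 1) = - ∑ k ∈ Finset.range (q.natDegree + 1),
          MvPolynomial.monomial (Finsupp.single i (k + 1)) (q.coeff k) := by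
      rw [map_mul, Polynomial.aeval_X, Polynomial.aeval_eq_sum_range, Finset.mul_sum]
      rw [sub_sub_cancel_left]
      congr 1
      refine Finset.sum_congr rfl fun k _ => ?_
      rw [mul_smul_comm, ← pow_succ', MvPolynomial.X_pow_eq_monomial,
        MvPolynomial.smul_monomial, smul_eq_mul, mul_one]
    rw [h1, MvPolynomial.support_neg] at hm
    have h2 := MvPolynomial.support_sum hm
    obtain ⟨k, hk, h3⟩ := Finset.mem_biUnion.1 h2
    have h4 := MvPolynomial.support_monomial_subset h3
    rw [Finset.mem_singleton.1 h4]
    exact so_local_pow hsem i hi k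
  · rw [← Ideal.Quotient.eq_zero_iff_mem]
    change Ideal.Quotient.mkₐ K M _ = 0
    rw [map_sub, map_one, ← Polynomial.aeval_algHom_apply, ← hx, map_mul, Polynomial.aeval_X, hq',
      mul_inv_cancel₀ hx0, sub_self]

lemma bwd {K : Type*} [Field K] {n : ℕ}
    {lt : (Fin n →₀ ℕ) → (Fin n →₀ ℕ) → Prop} (hc : IsControlOrder lt)
    (P : Ideal (MvPolynomial (Fin n) K)) (hP : Disjoint (SDen K lt) P) :
    ∃ M : Ideal (MvPolynomial (Fin n) K), M.IsMaximal ∧ P ≤ M ∧ Disjoint (SDen K lt) M := by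
  have hsem := hc.1
  set J : Ideal (MvPolynomial (Fin n) K) :=
    Ideal.span (MvPolynomial.X '' {i | IsLocalVar lt i}) with hJ
  have hne : P ⊔ J ≠ ⊤ := by
    intro h
    have h1 : (1 : MvPolynomial (Fin n) K) ∈ P ⊔ J := by rw [h]; trivial
    obtain ⟨a, ha, b, hb, hab⟩ := Submodule.mem_sup.1 h1
    suffices hs : a ∈ SDen K lt from Set.disjoint_left.1 hP hs ha
    rw [mem_SDen hsem]
    intro m hm
    have h2 : a - 1 = -b := by rw [← hab]; ring
    rw [h2, MvPolynomial.support_neg] at hm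
    exact hc.2 m (MvPolynomial.mem_ideal_span_X_image.1 hb m hm)
  obtain ⟨M, hM, hle⟩ := Ideal.exists_le_maximal _ hne
  refine ⟨M, hM, le_sup_left.trans hle, ?_⟩
  rw [Set.disjoint_left]
  intro s hs hsM
  rw [mem_SDen hsem] at hs
  have h3 : s - 1 ∈ J := by
    rw [hJ, MvPolynomial.mem_ideal_span_X_image]
    intro m hm
    by_contra! hcon
    refine so_nonlocal hsem m (fun i hi hl => hi (hcon i hl)) (hs m hm)
  have h4 := M.sub_mem hsM (hle (le_sup_right (a := P) h3))
  rw [sub_sub_cancel] at h4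
  exact hM.ne_top ((Ideal.eq_top_iff_one _).2 h4)

/-- `dim(S⁻¹A / S⁻¹I) = dim(A / (S⁻¹I)^c)` holds for every ideal `I ⊆ A`
iff the semigroup order `lt` is a control order. -/
theorem stmt_10 {K : Type*} [Field K] {n : ℕ}
    (lt : (Fin n →₀ ℕ) → (Fin n →₀ ℕ) → Prop) (hsem : IsSemigroupOrder lt)
    (S : Submonoid (MvPolynomial (Fin n) K))
    (hS : (S : Set (MvPolynomial (Fin n) K)) = SDen K lt) :
    (∀ I : Ideal (MvPolynomial (Fin n) K),
        ringKrullDim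
            (Localization S ⧸ I.map (algebraMap (MvPolynomial (Fin n) K) (Localization S))) =
          ringKrullDim
            (MvPolynomial (Fin n) K ⧸
              (I.map (algebraMap (MvPolynomial (Fin n) K) (Localization S))).comap
                (algebraMap (MvPolynomial (Fin n) K) (Localization S)))) ↔
      IsControlOrder lt := by
  constructor
  · intro hall
    refine ⟨hsem, ?_⟩
    rintro m ⟨i, hi, hmi⟩
    by_contra hlt
    have hm0 : m ≠ 0 := fun h => hmi (by rw [h]; rfl)
    have hpos : lt 0 m := by
      rcases so_tri hsem m 0 with h | h | h
      · exact absurd h hlt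
      · exact absurd h hm0
      · exact h
    refine dim_lt S _ ?_ ?_ ?_
      (hall (Ideal.span {1 - MvPolynomial.monomial m (1 : K)}))
    · rw [IsLocalization.map_algebraMap_ne_top_iff_disjoint S, Set.disjoint_left]
      intro s hs hsI
      obtain ⟨h, rfl⟩ := Ideal.mem_span_singleton.1 hsI
      rw [hS] at hs
      exact fwd_disjoint hsem m hm0 hpos h hs
    · refine (ringKrullDim_quotient_le _).trans_lt ?_
      rw [MvPolynomial.ringKrullDim_of_isNoetherianRing, ringKrullDim_eq_zero_of_field, zero_add]
      exact WithBot.coe_lt_coe.2 (ENat.natCast_lt_top _)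
    · intro M hM hle
      have h1 : (1 - MvPolynomial.monomial m (1 : K)) ∈ M :=
        hle (Ideal.le_comap_map (Ideal.mem_span_singleton_self _))
      obtain ⟨s, hs, hsM⟩ := fwd_max hsem i hi M hM (by
        intro hX
        have h2 : MvPolynomial.monomial m (1 : K) ∈ M := by
          refine M.mem_of_dvd ?_ hX
          rw [MvPolynomial.X_dvd_monomial]
          exact Or.inr hmi
        have h3 := M.add_mem h1 h2
        rw [sub_add_cancel] at h3
        exact hM.ne_top ((Ideal.eq_top_iff_one _).2 h3))
      exact ⟨s, by rw [← hS] at hs; exact hs, hsM⟩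
  · intro hc I
    refine le_antisymm (dim_le S _) (dim_ge K S _ ?_)
    intro P _ hP
    rw [hS] at hP ⊢
    exact bwd hc P hP
end
end

section
/- For any ideals I, J of A = K[x₁,…,xₙ] with I proper, β(√I, J) = √(β(I, J)), where √ denotes the radical of an ideal. -/
open scoped Classical

noncomputable section

theorem aux_le {R : Type*} [CommRing R] {ι : Type*} (s : Finset ι) (Q : ι → Ideal R)
    (p : Ideal R) (hp : p.IsPrime) (h : (⨅ i ∈ s, Q i) ≤ p) : ∃ i ∈ s, Q i ≤ p := by
  rw [← Finset.inf_eq_iInf] at h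
  exact (Ideal.IsPrime.inf_le' hp).1 h

theorem aux_top {R : Type*} [CommRing R] (Q J : Ideal R) (h : Q.radical ⊔ J = ⊤) :
    Q ⊔ J = ⊤ := by
  rw [← Ideal.radical_eq_top, Ideal.radical_sup, Ideal.radical_eq_top, eq_top_iff, ← h]
  exact sup_le_sup le_rfl Ideal.le_radical

theorem aux_rad {R : Type*} [CommRing R] {ι : Type*} (I : Ideal R) (P : ι → Ideal R)
    (s : Finset ι) (hP : MinPrimDecOn I.radical P s) (j : ι) (hj : j ∈ s) :
    (P j).radical = P j := by
  obtain ⟨h1, h2, -, h4⟩ := hP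
  have key : ∀ x f : R, f ∈ (⨅ i ∈ s.erase j, P i) → x * f ∈ (P j).radical →
      x * f ∈ P j := by
    intro x f hf hx
    obtain ⟨m, hm⟩ := hx
    have hle : I.radical ≤ P j := h1 ▸ iInf₂_le j hj
    apply hle
    have h5 : (x * f) ^ (m + 1) ∈ I.radical := by
      rw [h1]
      simp only [Ideal.mem_iInf] at hf ⊢
      intro i hi
      by_cases hij : i = j
      · subst hij
        rw [pow_succ]
        exact Ideal.mul_mem_right _ _ hm
      · rw [pow_succ]
        exact Ideal.mul_mem_left _ _
          (Ideal.mul_mem_left _ _ (hf i (Finset.mem_erase.2 ⟨hij, hi⟩)))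
    rw [← Ideal.radical_idem]
    exact ⟨m + 1, h5⟩
  obtain ⟨f, hf, hfj⟩ := SetLike.not_le_iff_exists.1 (h4 j hj)
  have hfr : f ∉ (P j).radical := fun h => hfj (by
    have := key 1 f hf (by simpa using h)
    simpa using this)
  refine le_antisymm (fun x hx => ?_) Ideal.le_radical
  have := key x f hf (Ideal.mul_mem_right _ _ hx)
  exact ((Ideal.isPrimary_iff.1 (h2 j hj)).2 this).resolve_right hfr

/-- `β(√I, J) = √(β(I, J))`. -/
theorem stmt_14 {K : Type*} [Field K] {n : ℕ}
    (I J : Ideal (MvPolynomial (Fin n) K)) (hI : I ≠ ⊤)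
    (k : ℕ) (Q : Fin k → Ideal (MvPolynomial (Fin n) K))
    (hQ : MinPrimDecOn I Q Finset.univ)
    (l : ℕ) (P : Fin l → Ideal (MvPolynomial (Fin n) K))
    (hP : MinPrimDecOn I.radical P Finset.univ) :
    extractionFrom J P Finset.univ = (extractionFrom J Q Finset.univ).radical := by
  have hPr := aux_rad I P Finset.univ hP
  obtain ⟨hQ1, hQ2, -, -⟩ := hQ
  obtain ⟨hP1, hP2, -, -⟩ := hP
  unfold extractionFrom
  have hrad : ∀ s : Finset (Fin k), (⨅ i ∈ s, Q i).radical = ⨅ i ∈ s, (Q i).radical := by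
    intro s
    rw [← Finset.inf_eq_iInf, ← Finset.inf_eq_iInf]
    induction s using Finset.induction_on with
    | empty => simp
    | insert a s ha ih => rw [Finset.inf_insert, Finset.inf_insert, Ideal.radical_inf, ih]
  rw [hrad]
  apply le_antisymm
  · refine le_iInf₂ fun i hi => ?_
    have hi' := (Finset.mem_filter.1 hi).2
    have hp : (Q i).radical.IsPrime := Ideal.isPrime_radical (hQ2 i (Finset.mem_univ _))
    obtain ⟨j, -, hj⟩ := aux_le Finset.univ P _ hp (by
      rw [← hP1]
      apply Ideal.radical_mono
      rw [hQ1]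
      exact iInf₂_le i (Finset.mem_univ i))
    refine (iInf₂_le j (Finset.mem_filter.2 ⟨Finset.mem_univ _, fun h => hi' ?_⟩)).trans hj
    apply aux_top
    rw [eq_top_iff, ← h]
    exact sup_le_sup_right hj J
  · refine le_iInf₂ fun j hj => ?_
    have hj' := (Finset.mem_filter.1 hj).2
    have hp : (P j).IsPrime := by
      rw [← hPr j (Finset.mem_univ _)]
      exact Ideal.isPrime_radical (hP2 j (Finset.mem_univ _))
    obtain ⟨i, -, hi⟩ := aux_le Finset.univ (fun i => (Q i).radical) _ hp (by
      rw [← hrad, ← hQ1, hP1]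
      exact iInf₂_le j (Finset.mem_univ j))
    refine (iInf₂_le i (Finset.mem_filter.2 ⟨Finset.mem_univ _, fun h => hj' ?_⟩)).trans hi
    rw [eq_top_iff, ← h]
    exact sup_le_sup_right (Ideal.le_radical.trans hi) J
end
end

section
/- For any ideals I, H, J of A = K[x₁,…,xₙ] with I and H proper, β(I ∩ H, J) = β(I, J) ∩ β(H, J). -/
open scoped Classical

noncomputable section

theorem mem_extractionFrom_iff_s15 {R : Type*} [CommRing R] {k : ℕ} (I J : Ideal R)
    (Q : Fin k → Ideal R) (hQ : MinPrimDecOn I Q Finset.univ) (f : R) :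
    f ∈ extractionFrom J Q Finset.univ ↔ ∃ s : R, s - 1 ∈ J ∧ s * f ∈ I := by
  obtain ⟨hI, hp, -, -⟩ := hQ
  have hmem : ∀ x, x ∈ I ↔ ∀ i, x ∈ Q i := by
    intro x
    rw [hI]
    simp [Submodule.mem_iInf]
  have hE : f ∈ extractionFrom J Q Finset.univ ↔ ∀ i, Q i ⊔ J ≠ ⊤ → f ∈ Q i := by
    simp [extractionFrom, Submodule.mem_iInf]
  have hone : ∀ s : R, s - 1 ∈ J ↔ Ideal.Quotient.mk J s = 1 := by
    intro s
    rw [← map_one (Ideal.Quotient.mk J), Ideal.Quotient.mk_eq_mk_iff_sub_mem]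
  rw [hE]
  constructor
  · intro h
    have h1 : ∀ i, ∃ s : R, s - 1 ∈ J ∧ s * f ∈ Q i := by
      intro i
      by_cases hi : Q i ⊔ J = ⊤
      · obtain ⟨a, ha, b, hb, hab⟩ := Submodule.mem_sup.1 ((Ideal.eq_top_iff_one _).1 hi)
        refine ⟨a, ?_, Ideal.mul_mem_right _ _ ha⟩
        have : a - 1 = -b := by rw [← hab]; ring
        rw [this]
        exact J.neg_mem hb
      · exact ⟨1, by simp, by simpa using h i hi⟩
    choose s hs hsf using h1
    refine ⟨∏ i, s i, ?_, ?_⟩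
    · rw [hone, map_prod]
      exact Finset.prod_eq_one fun i _ => (hone _).1 (hs i)
    · rw [hmem]
      intro i
      rw [← Finset.mul_prod_erase Finset.univ s (Finset.mem_univ i), mul_right_comm]
      exact Ideal.mul_mem_right _ _ (hsf i)
  · rintro ⟨s, hs, hsf⟩ i hi
    have h2 := (hmem _).1 hsf i
    rw [mul_comm] at h2
    rcases (Ideal.isPrimary_iff.1 (hp i (Finset.mem_univ i))).2 h2 with h3 | ⟨r, h3⟩
    · exact h3
    · exfalso
      apply hi
      rw [Ideal.eq_top_iff_one]
      have h4 : s ^ r - 1 ∈ J := by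
        rw [hone, map_pow, (hone s).1 hs, one_pow]
      have : (1 : R) = s ^ r - (s ^ r - 1) := by ring
      rw [this]
      exact Ideal.sub_mem _ (Ideal.mem_sup_left h3) (Ideal.mem_sup_right h4)

/-- `β(I ∩ H, J) = β(I, J) ∩ β(H, J)`. -/
theorem stmt_15 {K : Type*} [Field K] {n : ℕ}
    (I H J : Ideal (MvPolynomial (Fin n) K)) (hI : I ≠ ⊤) (hH : H ≠ ⊤)
    (k : ℕ) (Q : Fin k → Ideal (MvPolynomial (Fin n) K))
    (hQ : MinPrimDecOn I Q Finset.univ)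
    (l : ℕ) (N : Fin l → Ideal (MvPolynomial (Fin n) K))
    (hN : MinPrimDecOn H N Finset.univ)
    (m : ℕ) (W : Fin m → Ideal (MvPolynomial (Fin n) K))
    (hW : MinPrimDecOn (I ⊓ H) W Finset.univ) :
    extractionFrom J W Finset.univ =
      extractionFrom J Q Finset.univ ⊓ extractionFrom J N Finset.univ := by
  ext f
  rw [Submodule.mem_inf, mem_extractionFrom_iff_s15 _ J W hW, mem_extractionFrom_iff_s15 _ J Q hQ,
    mem_extractionFrom_iff_s15 _ J N hN]
  constructor
  · rintro ⟨s, hs, hf⟩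
    exact ⟨⟨s, hs, hf.1⟩, ⟨s, hs, hf.2⟩⟩
  · rintro ⟨⟨s, hs, hf⟩, ⟨t, ht, hg⟩⟩
    refine ⟨s * t, ?_, ?_, ?_⟩
    · have : s * t - 1 = t * (s - 1) + (t - 1) := by ring
      rw [this]
      exact J.add_mem (J.mul_mem_left _ hs) ht
    · have : s * t * f = t * (s * f) := by ring
      rw [this]
      exact I.mul_mem_left _ hf
    · have : s * t * f = s * (t * f) := by ring
      rw [this]
      exact H.mul_mem_left _ hg
end
end
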